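/- Let q ∈ ℂ with 0 < |q| < 1 and let a, x ∈ ℂ satisfy: a ≠ 0 and a ∉ {q^m : m ∈ ℤ} (so that (q^{1-i}/a;q)_j ≠ 0 for all i,j ∈ ℕ), and x ≠ q^{-m} for every m ∈ ℕ (so that (x;q)_k ≠ 0 for all k and (x;q)_∞ ≠ 0). Assume the family (i,j,k) ↦ (a;q)_i (q^{-j};q)_k q^{ik + jk + i(i+1)/2 + j^2 - 2ij} (-x/a)^j / ((q;q)_i (q;q)_j (q^{1-i}/a;q)_j (q;q)_k (x;q)_k) indexed by ℕ×ℕ×ℕ is absolutely summable. Then this triple sum equals (-q;q)_∞ (aq;q^2)_∞ / (x;q)_∞. -/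

import Mathlib

/-- The finite q-shifted factorial with base `Q`: `(a;Q)_n = ∏_{k=0}^{n-1} (1 - a Q^k)`. -/
noncomputable def qPoch (a q : ℂ) (n : ℕ) : ℂ := ∏ k ∈ Finset.range n, (1 - a * q ^ k)

/-- The infinite q-shifted factorial `(a;Q)_∞ = ∏_{k=0}^{∞} (1 - a Q^k)`. -/
noncomputable def qPochInf (a q : ℂ) : ℂ := ∏' k : ℕ, (1 - a * q ^ k)

open Filter Topology

lemma qP_zero (a q : ℂ) : qPoch a q 0 = 1 := by simp [qPoch]

lemma qP_succ (a q : ℂ) (n : ℕ) : qPoch a q (n+1) = qPoch a q n * (1 - a * q ^ n) := by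
  simp [qPoch, Finset.prod_range_succ]

lemma qP_succ' (a q : ℂ) (n : ℕ) : qPoch a q (n+1) = (1 - a) * qPoch (a * q) q n := by
  simp only [qPoch, Finset.prod_range_succ']
  rw [mul_comm]
  congr 1
  · simp
  · apply Finset.prod_congr rfl
    intro k _
    ring

lemma qP_add (a q : ℂ) (m n : ℕ) : qPoch a q (m+n) = qPoch a q m * qPoch (a * q ^ m) q n := by
  simp only [qPoch, Finset.prod_range_add]
  congr 1
  apply Finset.prod_congr rfl
  intro k _
  ring

lemma qP_mul_inf_summ (a q : ℂ) (hq1 : ‖q‖ < 1) : Summable (fun k : ℕ => ‖-(a * q ^ k)‖) := by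
  simp only [norm_neg, norm_mul, norm_pow]
  exact (summable_geometric_of_lt_one (norm_nonneg _) hq1).mul_left _

lemma qP_multipliable (a q : ℂ) (hq1 : ‖q‖ < 1) : Multipliable (fun k : ℕ => 1 - a * q ^ k) := by
  have := multipliable_one_add_of_summable (qP_mul_inf_summ a q hq1)
  simpa [sub_eq_add_neg] using this

lemma qP_tendsto (a q : ℂ) (hq1 : ‖q‖ < 1) :
    Tendsto (fun n => qPoch a q n) atTop (𝓝 (qPochInf a q)) :=
  (qP_multipliable a q hq1).tendsto_prod_tprod_nat

lemma qPInf_ne (a q : ℂ) (hq1 : ‖q‖ < 1) (h : ∀ k : ℕ, 1 - a * q ^ k ≠ 0) : qPochInf a q ≠ 0 := by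
  have := tprod_one_add_ne_zero_of_summable (f := fun k : ℕ => -(a * q ^ k))
    (by simpa [sub_eq_add_neg] using h) (qP_mul_inf_summ a q hq1)
  simpa [qPochInf, sub_eq_add_neg] using this

lemma qPInf_split (a q : ℂ) (hq1 : ‖q‖ < 1) (m : ℕ) :
    qPochInf a q = qPoch a q m * qPochInf (a * q ^ m) q := by
  have h1 := (qP_tendsto (a * q ^ m) q hq1).const_mul (qPoch a q m)
  have h2 := (tendsto_add_atTop_iff_nat m).2 (qP_tendsto a q hq1)
  refine tendsto_nhds_unique h2 (h1.congr ?_)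
  intro n
  rw [← qP_add, add_comm]

lemma qP_ne (a q : ℂ) (h : ∀ k : ℕ, 1 - a * q ^ k ≠ 0) (n : ℕ) : qPoch a q n ≠ 0 :=
  Finset.prod_ne_zero_iff.2 fun k _ => h k

lemma one_sub_ne (q : ℂ) (hq1 : ‖q‖ < 1) (k : ℕ) : 1 - q * q ^ k ≠ 0 := by
  intro h
  have h2 : q ^ (k+1) = 1 := by rw [pow_succ']; linear_combination -h
  have h3 : ‖q‖ ^ (k+1) = 1 := by rw [← norm_pow, h2, norm_one]
  have := pow_lt_one₀ (norm_nonneg q) hq1 (Nat.succ_ne_zero k)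
  simp at this
  linarith

lemma qq_ne (q : ℂ) (hq1 : ‖q‖ < 1) (n : ℕ) : qPoch q q n ≠ 0 := qP_ne q q (one_sub_ne q hq1) n

/-- uniform bound -/
lemma qP_bound (q : ℂ) (hq1 : ‖q‖ < 1) (R : ℝ) :
    ∃ B : ℝ, 0 < B ∧ ∀ a : ℂ, ‖a‖ ≤ R → ∀ n, ‖qPoch a q n‖ ≤ B := by
  refine ⟨Real.exp (R * (1 - ‖q‖)⁻¹), Real.exp_pos _, fun a ha n => ?_⟩
  have h := Finset.norm_prod_one_add_sub_one_le (Finset.range n) (fun k => -(a * q ^ k))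
  have h2 : ‖qPoch a q n‖ ≤ Real.exp (∑ i ∈ Finset.range n, ‖-(a * q ^ i)‖) := by
    have h3 : ‖qPoch a q n‖ ≤ ‖qPoch a q n - 1‖ + 1 := by
      calc ‖qPoch a q n‖ = ‖(qPoch a q n - 1) + 1‖ := by ring_nf
        _ ≤ _ := by simpa using norm_add_le (qPoch a q n - 1) (1:ℂ)
    simp only [← sub_eq_add_neg] at h
    unfold qPoch at h3 ⊢
    linarith
  refine h2.trans (Real.exp_le_exp.2 ?_)
  have hR : 0 ≤ R := (norm_nonneg a).trans ha
  have hs : ∑ i ∈ Finset.range n, ‖q‖ ^ i ≤ (1 - ‖q‖)⁻¹ := by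
    rw [← tsum_geometric_of_lt_one (norm_nonneg _) hq1]
    exact (summable_geometric_of_lt_one (norm_nonneg _) hq1).sum_le_tsum _ (fun i _ => by positivity)
  calc ∑ i ∈ Finset.range n, ‖-(a * q ^ i)‖ = ‖a‖ * ∑ i ∈ Finset.range n, ‖q‖ ^ i := by
        rw [Finset.mul_sum]; simp
    _ ≤ _ := mul_le_mul ha hs (Finset.sum_nonneg fun i _ => by positivity) hR

lemma qq_inv_bound (q : ℂ) (hq1 : ‖q‖ < 1) :
    ∃ D : ℝ, 0 < D ∧ ∀ n, ‖(qPoch q q n)⁻¹‖ ≤ D := by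
  have h := (qP_tendsto q q hq1).inv₀ (qPInf_ne q q hq1 (one_sub_ne q hq1))
  obtain ⟨D, hD⟩ := h.norm.bddAbove_range
  refine ⟨max D 1, by positivity, fun n => le_max_of_le_left (hD ⟨n, rfl⟩)⟩

lemma ch2 (k : ℕ) : (k+1).choose 2 = k.choose 2 + k := by
  simp [Nat.choose_succ_succ' k 1, add_comm]

lemma summ_theta (q : ℂ) (hq0 : 0 < ‖q‖) (hq1 : ‖q‖ < 1) (M : ℝ) :
    Summable (fun k : ℕ => ‖q‖ ^ (k.choose 2) * |M| ^ k) := by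
  have h : Summable (fun k : ℕ => ‖q‖ ^ (k.choose 2) * (|M| + 1) ^ k) := by
    apply summable_of_ratio_test_tendsto_lt_one (l := 0) zero_lt_one
    · exact Eventually.of_forall fun k => by positivity
    · have : Tendsto (fun k : ℕ => ‖q‖ ^ k * (|M| + 1)) atTop (𝓝 (0 * (|M|+1))) :=
        (tendsto_pow_atTop_nhds_zero_of_lt_one (norm_nonneg _) hq1).mul_const _
      rw [zero_mul] at this
      refine this.congr fun k => ?_
      have : (0:ℝ) < |M| + 1 := by positivity
      rw [ch2, Real.norm_of_nonneg (by positivity), Real.norm_of_nonneg (by positivity)]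
      field_simp
      ring
  refine Summable.of_nonneg_of_le (fun k => by positivity) (fun k => ?_) h
  gcongr
  linarith

/-- finite q-binomial theorem -/
lemma qbin (q : ℂ) (hq1 : ‖q‖ < 1) (z : ℂ) (j : ℕ) :
    ∑ k ∈ Finset.range (j+1), (-1)^k * q ^ (k.choose 2) * z ^ k *
      ((qPoch q q k)⁻¹ * (qPoch q q (j-k))⁻¹) = qPoch z q j * (qPoch q q j)⁻¹ := by
  have hne := qq_ne q hq1
  induction j with
  | zero => simp [qP_zero]
  | succ j ih =>
    have hj : (1 - q * q ^ j) ≠ 0 := one_sub_ne q hq1 j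
    apply mul_left_cancel₀ hj
    have e1 : (1 - q * q ^ j) * (qPoch z q (j+1) * (qPoch q q (j+1))⁻¹) =
      (1 - z * q ^ j) * (qPoch z q j * (qPoch q q j)⁻¹) := by
      rw [qP_succ, qP_succ]
      have := hne j
      field_simp
    rw [e1, ← ih, sub_mul 1 (z * q ^ j), one_mul, Finset.mul_sum]
    have key : ∀ k ∈ Finset.range (j+2), (1 - q * q ^ j) * ((-1)^k * q ^ (k.choose 2) * z ^ k *
      ((qPoch q q k)⁻¹ * (qPoch q q (j+1-k))⁻¹)) =
       (if k = j+1 then 0 else (-1)^k * q ^ (k.choose 2) * z ^ k *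
      ((qPoch q q k)⁻¹ * (qPoch q q (j-k))⁻¹)) + (if k = 0 then 0 else 
        -(z * q ^ j) * ((-1)^(k-1) * q ^ ((k-1).choose 2) * z ^ (k-1) *
      ((qPoch q q (k-1))⁻¹ * (qPoch q q (j-(k-1)))⁻¹))) := by
      intro k hk
      rw [Finset.mem_range] at hk
      rcases k with _ | k
      · have h1 := hne j
        simp [qP_zero, qP_succ]
        field_simp
      · obtain ⟨d, rfl⟩ : ∃ d, j = k + d := ⟨j - k, by omega⟩
        rcases d with _ | d
        · have h1 := hne k
          have := one_sub_ne q hq1 k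
          simp [qP_zero, qP_succ, ch2]
          field_simp
          ring
        · have h1 := hne k
          have h2 := hne d
          have h3 := one_sub_ne q hq1 k
          have h4 := one_sub_ne q hq1 d
          have a1 : k + (d+1) + 1 - (k+1) = d + 1 := by omega
          have a2 : k + (d+1) - (k+1) = d := by omega
          have a3 : k + (d+1) - k = d+1 := by omega
          rw [if_neg (by omega), if_neg (by omega)]
          simp only [a1, a2, a3, qP_succ, ch2, Nat.add_sub_cancel]
          field_simp
          ring
    rw [Finset.sum_congr rfl key, Finset.sum_add_distrib]
    rw [Finset.sum_range_succ, Finset.sum_range_succ' _ (j+1)]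
    simp only [if_true, add_zero, Nat.add_sub_cancel, Nat.succ_ne_zero, if_false]
    rw [← Finset.mul_sum, neg_mul, sub_eq_add_neg]
    congr 1
    apply Finset.sum_congr rfl
    intro k hk
    rw [Finset.mem_range] at hk
    rw [if_neg (by omega)]

/-- Euler -/
lemma euler (q : ℂ) (hq0 : 0 < ‖q‖) (hq1 : ‖q‖ < 1) (z : ℂ) :
    HasSum (fun k : ℕ => (-1)^k * q ^ (k.choose 2) * z ^ k * (qPoch q q k)⁻¹) (qPochInf z q) := by
  obtain ⟨D, hD0, hD⟩ := qq_inv_bound q hq1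
  obtain ⟨B, hB0, hB⟩ := qP_bound q hq1 ‖q‖
  have hs := summ_theta q hq0 hq1 ‖z‖
  have hsum : Summable (fun k : ℕ => (-1)^k * q ^ (k.choose 2) * z ^ k * (qPoch q q k)⁻¹) := by
    refine Summable.of_norm_bounded (hs.mul_right D) fun k => ?_
    simp only [norm_mul, norm_pow, norm_neg, norm_one, one_pow, one_mul, abs_norm]
    gcongr
    exact hD k
  have hT := tendsto_tsum_of_dominated_convergence (𝓕 := atTop) 
    (f := fun (j k : ℕ) => if k ∈ Finset.range (j+1) then qPoch q q j * ((-1)^k * q ^ (k.choose 2) * z ^ k *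
      ((qPoch q q k)⁻¹ * (qPoch q q (j-k))⁻¹)) else 0)
    (g := fun k : ℕ => (-1)^k * q ^ (k.choose 2) * z ^ k * (qPoch q q k)⁻¹)
    ((hs.mul_right (D * D)).mul_left B) ?_ ?_
  · rw [hsum.hasSum_iff]
    refine tendsto_nhds_unique hT ((qP_tendsto z q hq1).congr fun j => ?_)
    rw [tsum_eq_sum (s := Finset.range (j+1)) (fun k hk => by rw [if_neg hk])]
    rw [Finset.sum_congr rfl (fun k hk => by rw [if_pos hk]), ← Finset.mul_sum, qbin q hq1]
    have := qq_ne q hq1 j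
    field_simp
  · intro k
    have hI := qPInf_ne q q hq1 (one_sub_ne q hq1)
    have t1 := qP_tendsto q q hq1
    have t2 : Tendsto (fun j => (qPoch q q (j-k))⁻¹) atTop (𝓝 (qPochInf q q)⁻¹) :=
      (t1.comp (tendsto_sub_atTop_nat k)).inv₀ hI
    have t3 := (t1.mul t2).mul_const ((-1)^k * q ^ (k.choose 2) * z ^ k * (qPoch q q k)⁻¹)
    rw [mul_inv_cancel₀ hI, one_mul] at t3
    refine t3.congr' ?_
    filter_upwards [eventually_ge_atTop k] with j hj
    rw [if_pos (by simp; omega)]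
    ring
  · refine Eventually.of_forall fun j k => ?_
    split_ifs
    · simp only [norm_mul, norm_pow, norm_neg, norm_one, one_pow, one_mul, abs_norm]
      gcongr
      · exact hB q le_rfl j
      · exact hD k
      · exact hD _
    · rw [norm_zero]; positivity

lemma leb_summ (q : ℂ) (hq0 : 0 < ‖q‖) (hq1 : ‖q‖ < 1) (R : ℝ) :
    ∃ u : ℕ → ℝ, Summable u ∧ ∀ b : ℂ, ‖b‖ ≤ R → ∀ n,
      ‖qPoch b q n * (q ^ ((n+1).choose 2) * (qPoch q q n)⁻¹)‖ ≤ u n := by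
  obtain ⟨D, hD0, hD⟩ := qq_inv_bound q hq1
  obtain ⟨B, hB0, hB⟩ := qP_bound q hq1 R
  have hs := summ_theta q hq0 hq1 ‖q‖
  refine ⟨_, (hs.mul_right D).mul_left B, fun b hb n => ?_⟩
  simp only [norm_mul, norm_pow, abs_norm, ch2, pow_add]
  gcongr
  · exact hB b hb n
  · exact hD n

lemma leb_step (q : ℂ) (hq0 : 0 < ‖q‖) (hq1 : ‖q‖ < 1) (b : ℂ) :
    ∑' n, qPoch b q n * (q ^ ((n+1).choose 2) * (qPoch q q n)⁻¹) =
    (1 - b * q) * ∑' n, qPoch (b * q ^ 2) q n * (q ^ ((n+1).choose 2) * (qPoch q q n)⁻¹) := by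
  have hS : ∀ c : ℂ, Summable fun n => qPoch c q n * (q ^ ((n+1).choose 2) * (qPoch q q n)⁻¹) := by
    intro c
    obtain ⟨u, hu, h⟩ := leb_summ q hq0 hq1 ‖c‖
    exact Summable.of_norm_bounded hu (h c le_rfl)
  have hM : Summable fun n => qPoch (b*q) q n * q ^ n * (q ^ ((n+1).choose 2) * (qPoch q q n)⁻¹) := by
    obtain ⟨u, hu, h⟩ := leb_summ q hq0 hq1 ‖b*q‖
    refine Summable.of_norm_bounded hu fun n => le_trans ?_ (h (b*q) le_rfl n)
    have : ‖q ^ n‖ ≤ 1 := by rw [norm_pow]; exact pow_le_one₀ (norm_nonneg _) hq1.le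
    rw [mul_right_comm, norm_mul]
    exact mul_le_of_le_one_right (norm_nonneg _) this
  have e1 : ∑' n, qPoch b q n * (q ^ ((n+1).choose 2) * (qPoch q q n)⁻¹) -
      ∑' n, qPoch (b*q) q n * (q ^ ((n+1).choose 2) * (qPoch q q n)⁻¹) =
      -(b*q) * ∑' n, qPoch (b*q) q n * q ^ n * (q ^ ((n+1).choose 2) * (qPoch q q n)⁻¹) := by
    rw [← (hS b).tsum_sub (hS (b*q)), ((hS b).sub (hS (b*q))).tsum_eq_zero_add, ← tsum_mul_left]
    simp only [qP_zero, sub_self, zero_add]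
    apply tsum_congr
    intro n
    have h1 := qq_ne q hq1 n
    have h2 := one_sub_ne q hq1 n
    rw [qP_succ' b, qP_succ (b*q), qP_succ q, ch2 (n+1)]
    field_simp
    ring
  have e2 : ∑' n, qPoch (b*q) q n * (q ^ ((n+1).choose 2) * (qPoch q q n)⁻¹) -
      (b*q) * ∑' n, qPoch (b*q) q n * q ^ n * (q ^ ((n+1).choose 2) * (qPoch q q n)⁻¹) =
      (1 - b * q) * ∑' n, qPoch (b * q ^ 2) q n * (q ^ ((n+1).choose 2) * (qPoch q q n)⁻¹) := by
    rw [← tsum_mul_left, ← tsum_mul_left, ← (hS (b*q)).tsum_sub (hM.mul_left _)]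
    apply tsum_congr
    intro n
    have := qP_succ (b*q) q n
    rw [qP_succ', mul_assoc b, ← pow_two] at this
    linear_combination -(q ^ ((n+1).choose 2) * (qPoch q q n)⁻¹) * this
  linear_combination e1 + e2

lemma lebesgue (q : ℂ) (hq0 : 0 < ‖q‖) (hq1 : ‖q‖ < 1) (a : ℂ) :
    ∑' n, qPoch a q n * (q ^ ((n+1).choose 2) * (qPoch q q n)⁻¹) =
    qPochInf (-q) q * qPochInf (a * q) (q ^ 2) := by
  have it : ∀ m : ℕ, ∑' n, qPoch a q n * (q ^ ((n+1).choose 2) * (qPoch q q n)⁻¹) =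
    qPoch (a*q) (q^2) m * 
      ∑' n, qPoch (a * (q ^ 2)^m) q n * (q ^ ((n+1).choose 2) * (qPoch q q n)⁻¹) := by
    intro m
    induction m with
    | zero => simp [qP_zero]
    | succ m ih => 
      rw [ih, leb_step q hq0 hq1, qP_succ]
      ring_nf
  have hq2 : ‖q^2‖ < 1 := by rw [norm_pow]; exact pow_lt_one₀ (norm_nonneg _) hq1 two_ne_zero
  obtain ⟨u, hu, h⟩ := leb_summ q hq0 hq1 ‖a‖
  have hT := tendsto_tsum_of_dominated_convergence (𝓕 := atTop) 
    (f := fun (m n : ℕ) => qPoch (a * (q ^ 2)^m) q n * (q ^ ((n+1).choose 2) * (qPoch q q n)⁻¹))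
    (g := fun n : ℕ => qPoch 0 q n * (q ^ ((n+1).choose 2) * (qPoch q q n)⁻¹))
    hu ?_ ?_
  · have hT2 := (qP_tendsto (a*q) (q^2) hq2).mul hT
    have := tendsto_nhds_unique (hT2.congr fun m => (it m).symm) tendsto_const_nhds
    rw [← this, mul_comm]
    congr 1
    rw [← (euler q hq0 hq1 (-q)).tsum_eq]
    apply tsum_congr
    intro n
    have : qPoch 0 q n = 1 := by simp [qPoch]
    rw [this, ch2, neg_pow q, pow_add]
    have : ((-1:ℂ)^n) * (-1)^n = 1 := by rw [← mul_pow]; simp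
    linear_combination (-q ^ n.choose 2 * q ^ n * (qPoch q q n)⁻¹) * this
  · intro n
    apply Tendsto.mul_const
    have t : Tendsto (fun m : ℕ => a * (q^2)^m) atTop (𝓝 0) := by
      simpa using (tendsto_pow_atTop_nhds_zero_of_norm_lt_one hq2).const_mul a
    have c : Continuous fun b : ℂ => qPoch b q n := by
      unfold qPoch
      fun_prop
    exact (c.tendsto 0).comp t
  · refine Eventually.of_forall fun m n => h _ ?_ n
    rw [norm_mul, norm_pow]
    exact mul_le_of_le_one_right (norm_nonneg _) (pow_le_one₀ (norm_nonneg _) hq2.le)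

lemma tele (q : ℂ) (hq1 : ‖q‖ < 1) (t M L : ℕ) (hL : L ≤ M) :
    ∑ l ∈ Finset.range (L+1), (-1)^(M+1-l) * q ^ ((M+1-l).choose 2) * qPoch q q (M+t+l) *
      ((qPoch q q l)⁻¹ * (qPoch q q (l+t))⁻¹ * (qPoch q q (M+1-l))⁻¹) =
    (-1)^(M+1-L) * q ^ ((M-L+1).choose 2) * qPoch q q (M+t+L+1) *
      ((1 - q * q ^ M)⁻¹ * (1 - q * q ^ (t+M))⁻¹ * (qPoch q q (M-L))⁻¹ * (qPoch q q L)⁻¹ * 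
        (qPoch q q (t+L))⁻¹) := by
  induction L with
  | zero =>
    have h1 := one_sub_ne q hq1 M
    have h2 := one_sub_ne q hq1 (t+M)
    have h3 := qq_ne q hq1 M
    have h4 := qq_ne q hq1 t
    simp only [zero_add, Finset.sum_range_one, qP_zero, Nat.sub_zero, add_zero, qP_succ]
    rw [add_comm M t]
    field_simp
  | succ L ih =>
    rw [Finset.sum_range_succ, ih (by omega)]
    obtain ⟨d, rfl⟩ : ∃ d, M = L + 1 + d := ⟨M - (L+1), by omega⟩
    have a1 : L + 1 + d + 1 - L = d + 2 := by omega
    have a2 : L + 1 + d - L = d + 1 := by omega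
    have a3 : L + 1 + d + 1 - (L+1) = d + 1 := by omega
    have a4 : L + 1 + d - (L+1) = d := by omega
    have a5 : L + 1 + d + t + (L+1) = (L + 1 + d + t + L) + 1 := by omega
    have a6 : L + 1 + t = (t+L) + 1 := by omega
    have a7 : t + (L+1) = (t+L) + 1 := by omega
    have h1 := one_sub_ne q hq1 (L+1+d)
    have h2 := one_sub_ne q hq1 (t+(L+1+d))
    have h3 := qq_ne q hq1 d
    have h4 := one_sub_ne q hq1 d
    have h5 := qq_ne q hq1 L
    have h6 := one_sub_ne q hq1 L
    have h7 := qq_ne q hq1 (t+L)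
    have h8 := one_sub_ne q hq1 (t+L)
    simp only [a1, a2, a3, a4, a5, a6, a7, ch2, qP_succ]
    field_simp
    ring

lemma tele0 (q : ℂ) (hq1 : ‖q‖ < 1) (t M : ℕ) :
    ∑ l ∈ Finset.range (M+2), (-1)^(M+1-l) * q ^ ((M+1-l).choose 2) * qPoch q q (M+t+l) *
      ((qPoch q q l)⁻¹ * (qPoch q q (l+t))⁻¹ * (qPoch q q (M+1-l))⁻¹) = 0 := by
  rw [Finset.sum_range_succ, tele q hq1 t M M le_rfl]
  have h1 := one_sub_ne q hq1 M
  have h2 := one_sub_ne q hq1 (t+M)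
  have h3 := qq_ne q hq1 M
  have h4 := qq_ne q hq1 (t+M)
  have a1 : M + 1 + t = (t + M) + 1 := by omega
  have a2 : M + t + (M+1) = M + t + M + 1 := by omega
  have a3 : M + 1 - M = 1 := by omega
  simp only [a1, a2, a3, Nat.sub_self, qP_succ, qP_zero, ch2]
  simp
  field_simp
  ring

noncomputable def HH (q x : ℂ) (s p l r : ℕ) : ℂ :=
  x ^ (l+p+r) * (-1)^r * q ^ (r.choose 2) * qPoch (q ^ (l+s+r)) q (l+p) *
    ((qPoch q q (l+s))⁻¹ * (qPoch q q (l+p))⁻¹ * (qPoch q q r)⁻¹)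

noncomputable def FF (q x : ℂ) (s p l : ℕ) : ℂ :=
  x ^ (l+p) * (qPoch q q (l+s))⁻¹ * ∑ k ∈ Finset.range (l+p+1), 
    (-1)^k * q ^ (k.choose 2) * q ^ ((l+s)*k) * ((qPoch q q k)⁻¹ * (qPoch q q (l+p-k))⁻¹) *
      (qPoch x q k)⁻¹

lemma HH_diag (q x : ℂ) (hq1 : ‖q‖ < 1) (s p : ℕ) (hsp : s = 0 ∨ p = 0) (N : ℕ) :
    ∑ c ∈ Finset.HasAntidiagonal.antidiagonal N, HH q x s p c.1 c.2 = 
      if N = 0 ∧ p = 0 then (qPoch q q s)⁻¹ else 0 := by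
  rw [Finset.Nat.sum_antidiagonal_eq_sum_range_succ (fun l r => HH q x s p l r)]
  rcases N with _ | M
  · rcases p with _ | p
    · simp [HH, qP_zero]
    · have : s = 0 := by omega
      subst this
      simp [HH, qP_zero, qP_succ']
  · rw [if_neg (by omega)]
    have key : ∀ l ∈ Finset.range (M+2), HH q x s p l (M+1-l) = 
       (x ^ (M+1+p) * (qPoch q q (M+s))⁻¹) * ((-1)^(M+1-l) * q ^ ((M+1-l).choose 2) * qPoch q q (M+(s+p)+l) *
      ((qPoch q q l)⁻¹ * (qPoch q q (l+(s+p)))⁻¹ * (qPoch q q (M+1-l))⁻¹)) := by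
      intro l hl
      rw [Finset.mem_range] at hl
      have a1 : l + p + (M+1-l) = M+1+p := by omega
      have a2 : l + s + (M+1-l) = (M + s) + 1 := by omega
      have e : M + (s+p) + l = (M+s) + (l+p) := by omega
      have h1 := qq_ne q hq1 (M+s)
      rw [HH, a1, a2, e, qP_add q q (M+s) (l+p), ← pow_succ']
      have : (qPoch q q (l+s))⁻¹ * (qPoch q q (l+p))⁻¹ = (qPoch q q l)⁻¹ * (qPoch q q (l+(s+p)))⁻¹ := by
        rcases hsp with rfl | rfl
        · simp
        · simp [mul_comm]
      rw [this]
      field_simp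
    rw [Finset.sum_congr rfl key, ← Finset.mul_sum, tele0 q hq1, mul_zero]

lemma fiber (q x : ℂ) (hq0 : 0 < ‖q‖) (hq1 : ‖q‖ < 1) (hx1 : ‖x‖ < 1) 
    (hx : ∀ k : ℕ, 1 - x * q ^ k ≠ 0) (s p : ℕ) (hsp : s = 0 ∨ p = 0) :
    ∑' l, FF q x s p l = if p = 0 then (qPoch q q s)⁻¹ * (qPochInf x q)⁻¹ else 0 := by
  have hI := qPInf_ne x q hq1 hx
  obtain ⟨D, hD0, hD⟩ := qq_inv_bound q hq1
  obtain ⟨B, hB0, hB⟩ := qP_bound q hq1 1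
  have hS : Summable (fun c : ℕ × ℕ => HH q x s p c.1 c.2) := by
    have hg := summable_geometric_of_lt_one (norm_nonneg _) hx1
    have hg2 := ((hg.mul_of_nonneg hg (fun _ => by positivity) (fun _ => by positivity)).mul_right (B * (D * D * D)))
    refine Summable.of_norm_bounded hg2 fun c => ?_
    have b1 : ‖q‖ ^ (c.2.choose 2) ≤ 1 := pow_le_one₀ (norm_nonneg _) hq1.le
    have b2 : ‖x‖ ^ p ≤ 1 := pow_le_one₀ (norm_nonneg _) hx1.le
    have b3 : ‖qPoch (q ^ (c.1+s+c.2)) q (c.1+p)‖ ≤ B := 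
      hB _ (by rw [norm_pow]; exact pow_le_one₀ (norm_nonneg _) hq1.le) _
    simp only [HH, norm_mul, norm_pow, norm_neg, norm_one, one_pow, mul_one]
    rw [pow_add ‖x‖, pow_add ‖x‖]
    calc _ ≤ ‖x‖ ^ c.1 * 1 * ‖x‖ ^ c.2 * 1 * B * (D * D * D) := by
          gcongr <;> apply hD
      _ = _ := by ring
  have hF : ∀ l, HasSum (fun r => HH q x s p l r) (FF q x s p l * qPochInf x q) := by
    intro l
    have h1 : ∀ k ∈ Finset.range (l+p+1), HasSum (fun r : ℕ => 
        (x ^ (l+p) * (qPoch q q (l+s))⁻¹ * ((-1)^k * q ^ (k.choose 2) * q ^ ((l+s)*k) * ((qPoch q q k)⁻¹ * (qPoch q q (l+p-k))⁻¹))) * ((-1)^r * q ^ (r.choose 2) * (x * q ^ k) ^ r * (qPoch q q r)⁻¹)) 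
        ((x ^ (l+p) * (qPoch q q (l+s))⁻¹ * ((-1)^k * q ^ (k.choose 2) * q ^ ((l+s)*k) * ((qPoch q q k)⁻¹ * (qPoch q q (l+p-k))⁻¹))) * qPochInf (x * q ^ k) q) :=
      fun k _ => (euler q hq0 hq1 (x * q ^ k)).mul_left _
    have h2 := hasSum_sum h1
    convert h2 using 1
    · funext r
      rw [HH]
      have := qbin q hq1 (q ^ (l+s+r)) (l+p)
      have e : x ^ (l+p+r) * (-1)^r * q ^ (r.choose 2) * qPoch (q ^ (l+s+r)) q (l+p) *
        ((qPoch q q (l+s))⁻¹ * (qPoch q q (l+p))⁻¹ * (qPoch q q r)⁻¹) =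
        (x ^ (l+p+r) * (-1)^r * q ^ (r.choose 2) * (qPoch q q (l+s))⁻¹ * (qPoch q q r)⁻¹) * (qPoch (q ^ (l+s+r)) q (l+p) * (qPoch q q (l+p))⁻¹) := by ring
      rw [e, ← this, Finset.mul_sum]
      apply Finset.sum_congr rfl
      intro k _
      have : (q ^ (l+s+r))^k = q ^ ((l+s)*k) * (q^k)^r := by
        rw [← pow_mul, ← pow_mul, ← pow_add]; ring_nf
      rw [this, mul_pow x, pow_add x (l+p) r]
      ring
    · rw [FF, Finset.mul_sum, Finset.sum_mul]
      apply Finset.sum_congr rfl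
      intro k _
      have hk := qP_ne x q hx k
      rw [qPInf_split x q hq1 k]
      field_simp
  have e1 : (∑' l, FF q x s p l) * qPochInf x q = ∑' c : ℕ × ℕ, HH q x s p c.1 c.2 := by
    rw [← tsum_mul_right, hS.tsum_prod]
    exact tsum_congr fun l => (hF l).tsum_eq.symm
  have e2 : ∑' c : ℕ × ℕ, HH q x s p c.1 c.2 = if p = 0 then (qPoch q q s)⁻¹ else 0 := by
    rw [← Finset.HasAntidiagonal.sigmaAntidiagonalEquivProd.tsum_eq]
    have hS' := (Finset.HasAntidiagonal.sigmaAntidiagonalEquivProd (A := ℕ)).summable_iff.2 hS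
    refine hS'.tsum_sigma.trans ?_
    rw [tsum_congr (g := fun N : ℕ => if N = 0 ∧ p = 0 then (qPoch q q s)⁻¹ else 0)]
    · rw [tsum_eq_single 0 (fun N hN => by simp [hN])]
      simp
    · intro N
      rw [← HH_diag q x hq1 s p hsp N, tsum_fintype]
      exact Finset.sum_coe_sort (Finset.HasAntidiagonal.antidiagonal N) (fun c => HH q x s p c.1 c.2)
  rw [e2] at e1
  rw [eq_div_of_mul_eq hI e1]
  split_ifs <;> simp [div_eq_mul_inv]

lemma qneg (q : ℂ) (hq : q ≠ 0) (j k : ℕ) (hk : k ≤ j) :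
    qPoch (q ^ (-(j:ℤ))) q k * q ^ (j*k) * qPoch q q (j-k) = (-1)^k * q ^ (k.choose 2) * qPoch q q j := by
  induction k with
  | zero => simp [qP_zero]
  | succ k ih =>
    have ih := ih (by omega)
    obtain ⟨d, rfl⟩ : ∃ d, j = k + 1 + d := ⟨j - (k+1), by omega⟩
    have a1 : k + 1 + d - k = d + 1 := by omega
    have a2 : k + 1 + d - (k+1) = d := by omega
    rw [a1, qP_succ q q d] at ih
    rw [a2, qP_succ, ch2, mul_add, mul_one]
    have h2 : q ^ (-((k+1+d : ℕ):ℤ)) * q ^ (k+1+d) = 1 := by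
      rw [zpow_neg, zpow_natCast]; exact inv_mul_cancel₀ (pow_ne_zero _ hq)
    generalize q ^ (-((k+1+d : ℕ):ℤ)) = w at *
    simp only [pow_add, pow_one] at h2 ⊢ ih
    generalize hP : qPoch w q k = P at *
    linear_combination (-q^k) * ih - P * (q ^ ((k+1+d)*k)) * qPoch q q d * q ^ k * h2 

lemma qneg0 (q : ℂ) (hq : q ≠ 0) (j k : ℕ) (hk : j < k) :
    qPoch (q ^ (-(j:ℤ))) q k = 0 := by
  apply Finset.prod_eq_zero (Finset.mem_range.2 hk)
  rw [zpow_neg, zpow_natCast, inv_mul_cancel₀ (pow_ne_zero _ hq), sub_self]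

noncomputable def RR (q a : ℂ) (i j : ℕ) : ℂ :=
  qPoch a q i * (qPoch (q ^ ((1 : ℤ) - (i : ℤ)) / a) q j)⁻¹ *
    q ^ ((((i+1).choose 2 : ℕ) : ℤ) + (j : ℤ) ^ 2 - 2 * (i : ℤ) * (j : ℤ)) * (-1 / a) ^ j

lemma RR_succ (q a : ℂ) (hq : q ≠ 0) (ha : a ≠ 0) (haq : ∀ m : ℤ, a ≠ q ^ m) (i j : ℕ) :
    RR q a (i+1) (j+1) = RR q a i j := by
  have e1 : q ^ ((1:ℤ) - ((i+1 : ℕ):ℤ)) / a * q = q ^ ((1:ℤ) - (i:ℤ)) / a := by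
    have : (1:ℤ) - (i:ℤ) = ((1:ℤ) - ((i+1 : ℕ):ℤ)) + 1 := by push_cast; ring
    rw [this, zpow_add₀ hq, zpow_one]; ring
  have e2 : ((((i+1+1).choose 2 : ℕ) : ℤ) + ((j+1 : ℕ) : ℤ) ^ 2 - 2 * ((i+1:ℕ) : ℤ) * ((j+1:ℕ) : ℤ)) =
     ((((i+1).choose 2 : ℕ) : ℤ) + (j : ℤ) ^ 2 - 2 * (i : ℤ) * (j : ℤ)) + (-(i:ℤ)) := by
    rw [ch2 (i+1)]; push_cast; ring
  have e3 : q ^ ((1:ℤ) - ((i+1 : ℕ):ℤ)) = (q ^ i)⁻¹ := by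
    rw [← zpow_natCast, ← zpow_neg]; congr 1; push_cast; ring
  have e4 : 1 - q ^ ((1:ℤ) - ((i+1 : ℕ):ℤ)) / a ≠ 0 := by
    intro h
    apply haq ((1:ℤ) - ((i+1 : ℕ):ℤ))
    rw [sub_eq_zero, eq_div_iff ha, one_mul] at h
    exact h
  have hqi : q ^ i ≠ 0 := pow_ne_zero _ hq
  unfold RR
  rw [qP_succ' (q ^ ((1:ℤ) - ((i+1 : ℕ):ℤ)) / a), e1, e2, qP_succ, zpow_add₀ hq, zpow_neg, zpow_natCast, mul_inv, pow_succ (-1/a)]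
  rw [e3] at e4 ⊢
  have e5 : (1 - a * q ^ i) * (1 - (q ^ i)⁻¹ / a)⁻¹ * (q^i)⁻¹ * (-1/a) = 1 := by
    rw [mul_inv_eq_iff_eq_mul₀ e4 |>.2 (show (1 - a * q ^ i) = (-a * q^i) * (1 - (q ^ i)⁻¹ / a) by field_simp; ring)]
    field_simp
  linear_combination (qPoch a q i * (qPoch (q ^ ((1 : ℤ) - (i : ℤ)) / a) q j)⁻¹ *
    q ^ ((((i+1).choose 2 : ℕ) : ℤ) + (j : ℤ) ^ 2 - 2 * (i : ℤ) * (j : ℤ)) * (-1 / a) ^ j) * e5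

lemma RR_add (q a : ℂ) (hq : q ≠ 0) (ha : a ≠ 0) (haq : ∀ m : ℤ, a ≠ q ^ m) (s p l : ℕ) :
    RR q a (l+s) (l+p) = RR q a s p := by
  induction l with
  | zero => simp
  | succ l ih => rw [← ih, ← RR_succ q a hq ha haq (l+s) (l+p)]; congr 1 <;> omega

noncomputable def GG (q x : ℂ) (i j k : ℕ) : ℂ :=
  x ^ j * (qPoch q q i)⁻¹ * (if k ∈ Finset.range (j+1) then
    (-1)^k * q ^ (k.choose 2) * q ^ (i*k) * ((qPoch q q k)⁻¹ * (qPoch q q (j-k))⁻¹) *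
      (qPoch x q k)⁻¹ else 0)

lemma term_eq (q a x : ℂ) (hq : q ≠ 0) (hq1 : ‖q‖ < 1) (i j k : ℕ) :
    qPoch a q i * qPoch (q ^ (-(j : ℤ))) q k *
        q ^ ((i : ℤ) * (k : ℤ) + (j : ℤ) * (k : ℤ) +
          (i : ℤ) * ((i : ℤ) + 1) / 2 + (j : ℤ) ^ 2 -
          2 * (i : ℤ) * (j : ℤ)) *
        (-x / a) ^ j /
        (qPoch q q i * qPoch q q j *
          qPoch (q ^ ((1 : ℤ) - (i : ℤ)) / a) q j *
          qPoch q q k * qPoch x q k) = RR q a i j * GG q x i j k := by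
  have c : (i : ℤ) * ((i : ℤ) + 1) / 2 = (((i+1).choose 2 : ℕ) : ℤ) := by
    rw [Nat.choose_two_right]; rw [Nat.add_sub_cancel]; push_cast; rw [mul_comm]
  have e : (i : ℤ) * (k : ℤ) + (j : ℤ) * (k : ℤ) +
          (((i+1).choose 2 : ℕ) : ℤ) + (j : ℤ) ^ 2 - 2 * (i : ℤ) * (j : ℤ) = 
          ((i*k : ℕ) : ℤ) + ((j*k : ℕ) : ℤ) + ((((i+1).choose 2 : ℕ) : ℤ) + (j : ℤ) ^ 2 - 2 * (i : ℤ) * (j : ℤ)) := by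
    push_cast; ring
  have ex : -x / a = x * (-1/a) := by ring
  rw [c, e, zpow_add₀ hq, zpow_add₀ hq, zpow_natCast, zpow_natCast, ex, mul_pow]
  unfold RR GG
  by_cases hk : k ≤ j
  · rw [if_pos (by simp; omega)]
    have h := qneg q hq j k hk
    have h1 := qq_ne q hq1 j
    have h2 := qq_ne q hq1 (j-k)
    have h' : qPoch (q ^ (-(j:ℤ))) q k * q ^ (j*k) * (qPoch q q j)⁻¹ = (-1)^k * q ^ (k.choose 2) * (qPoch q q (j-k))⁻¹ := by
      field_simp
      linear_combination h
    rw [div_eq_mul_inv]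
    simp only [mul_inv]
    generalize q ^ ((((i+1).choose 2 : ℕ) : ℤ) + (j : ℤ) ^ 2 - 2 * (i : ℤ) * (j : ℤ)) = Z
    generalize (qPoch (q ^ ((1 : ℤ) - (i : ℤ)) / a) q j)⁻¹ = Y
    linear_combination (qPoch a q i * Y * Z * (-1/a)^j * x ^ j * (qPoch q q i)⁻¹ * q ^ (i*k) * (qPoch q q k)⁻¹ * (qPoch x q k)⁻¹) * h'
  · rw [if_neg (by simp; omega), qneg0 q hq j k (by omega)]
    simp

def eqv : ℤ × ℕ × ℕ ≃ ℕ × ℕ × ℕ where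
  toFun c := (c.2.1 + c.1.toNat, c.2.1 + (-c.1).toNat, c.2.2)
  invFun d := ((d.1 : ℤ) - d.2.1, min d.1 d.2.1, d.2.2)
  left_inv := by
    rintro ⟨n, l, k⟩
    simp only [Prod.mk.injEq, and_true]
    omega
  right_inv := by
    rintro ⟨i, j, k⟩
    simp only [Prod.mk.injEq, and_true]
    omega

lemma main_aux (q a x : ℂ) (hq0 : 0 < ‖q‖) (hq1 : ‖q‖ < 1) (ha : a ≠ 0) (haq : ∀ m : ℤ, a ≠ q ^ m)
    (hx : ∀ k : ℕ, 1 - x * q ^ k ≠ 0)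
    (hS : Summable (fun p : ℕ × ℕ × ℕ => RR q a p.1 p.2.1 * GG q x p.1 p.2.1 p.2.2)) :
    ∑' p : ℕ × ℕ × ℕ, RR q a p.1 p.2.1 * GG q x p.1 p.2.1 p.2.2 =
      qPochInf (-q) q * qPochInf (a * q) (q ^ 2) / qPochInf x q := by
  have hq : q ≠ 0 := norm_pos_iff.1 hq0
  have hx1 : ‖x‖ < 1 := by
    have hinj : Function.Injective (fun l : ℕ => ((l, l, 0) : ℕ × ℕ × ℕ)) := by
      intro l m h; simpa using h
    have h1 := (hS.comp_injective hinj).tendsto_atTop_zero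
    obtain ⟨B, hB0, hB⟩ := qP_bound q hq1 ‖q‖
    have h2 : Tendsto (fun l : ℕ => x ^ l) atTop (𝓝 0) := by
      rw [tendsto_zero_iff_norm_tendsto_zero] at h1 ⊢
      have h3 := h1.mul_const (B * B)
      rw [zero_mul] at h3
      refine squeeze_zero (fun _ => norm_nonneg _) (fun l => ?_) h3
      have r : RR q a l l = 1 := by
        have := RR_add q a hq ha haq 0 0 l
        simpa [RR, qP_zero] using this
      have hn := qq_ne q hq1 l
      have hb := hB q le_rfl l
      have : x ^ l = (x ^ l * (qPoch q q l)⁻¹ * (qPoch q q l)⁻¹) * (qPoch q q l * qPoch q q l) := by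
        field_simp
      simp only [Function.comp, r, GG, one_mul]
      rw [if_pos (by simp)]
      simp only [qP_zero, Nat.sub_zero, pow_zero, Nat.choose_zero_succ, mul_zero, inv_one, mul_one, one_mul]
      conv_lhs => rw [this, norm_mul, norm_mul (qPoch q q l)]
      gcongr
    by_contra hc
    rw [tendsto_zero_iff_norm_tendsto_zero] at h2
    have := (h2.eventually (gt_mem_nhds (zero_lt_one))).exists
    obtain ⟨l, hl⟩ := this
    rw [norm_pow] at hl
    exact absurd (one_le_pow₀ (not_lt.1 hc)) (not_le.2 hl)
  rw [← eqv.tsum_eq]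
  have hS' := eqv.summable_iff.2 hS
  refine hS'.tsum_prod.trans ?_
  have inner : ∀ n : ℤ, ∑' c : ℕ × ℕ, ((fun p : ℕ × ℕ × ℕ => RR q a p.1 p.2.1 * GG q x p.1 p.2.1 p.2.2) ∘ eqv) (n, c)
      = RR q a n.toNat (-n).toNat * 
        if (-n).toNat = 0 then (qPoch q q n.toNat)⁻¹ * (qPochInf x q)⁻¹ else 0 := by
    intro n
    rw [← fiber q x hq0 hq1 hx1 hx n.toNat (-n).toNat (by omega), ← tsum_mul_left]
    rw [(hS'.prod_factor n).tsum_prod]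
    apply tsum_congr
    intro l
    change ∑' k, RR q a (l + n.toNat) (l + (-n).toNat) * GG q x (l + n.toNat) (l + (-n).toNat) k = _
    simp only [RR_add q a hq ha haq]
    unfold GG
    rw [tsum_eq_sum (s := Finset.range (l + (-n).toNat + 1)) (fun k hk => by rw [if_neg hk]; simp)]
    rw [← Finset.mul_sum, ← Finset.mul_sum, FF]
    congr 2
    apply Finset.sum_congr rfl
    intro k hk
    rw [if_pos hk]
  rw [tsum_congr inner]
  rw [← (Nat.cast_injective (R := ℤ)).tsum_eq]
  · rw [← lebesgue q hq0 hq1 a, div_eq_mul_inv, ← tsum_mul_right]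
    apply tsum_congr
    intro n
    simp [RR, qP_zero]
    ring
  · intro n hn
    by_contra hc
    apply hn
    have : ¬ 0 ≤ n := fun h => hc ⟨n.toNat, by simp [h]⟩
    beta_reduce
    rw [if_neg (by omega), mul_zero]

theorem stmt15 (q : ℂ) (hq0 : 0 < ‖q‖) (hq1 : ‖q‖ < 1)
    (a x : ℂ) (ha : a ≠ 0) (haq : ∀ m : ℤ, a ≠ q ^ m)
    (hx : ∀ m : ℕ, x ≠ q ^ (-(m : ℤ)))
    (h1 : Summable (fun p : ℕ × ℕ × ℕ =>
      ‖qPoch a q p.1 * qPoch (q ^ (-(p.2.1 : ℤ))) q p.2.2 *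
        q ^ ((p.1 : ℤ) * (p.2.2 : ℤ) + (p.2.1 : ℤ) * (p.2.2 : ℤ) +
          (p.1 : ℤ) * ((p.1 : ℤ) + 1) / 2 + (p.2.1 : ℤ) ^ 2 -
          2 * (p.1 : ℤ) * (p.2.1 : ℤ)) *
        (-x / a) ^ p.2.1 /
        (qPoch q q p.1 * qPoch q q p.2.1 *
          qPoch (q ^ ((1 : ℤ) - (p.1 : ℤ)) / a) q p.2.1 *
          qPoch q q p.2.2 * qPoch x q p.2.2)‖)) :
    ∑' p : ℕ × ℕ × ℕ,
      qPoch a q p.1 * qPoch (q ^ (-(p.2.1 : ℤ))) q p.2.2 *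
        q ^ ((p.1 : ℤ) * (p.2.2 : ℤ) + (p.2.1 : ℤ) * (p.2.2 : ℤ) +
          (p.1 : ℤ) * ((p.1 : ℤ) + 1) / 2 + (p.2.1 : ℤ) ^ 2 -
          2 * (p.1 : ℤ) * (p.2.1 : ℤ)) *
        (-x / a) ^ p.2.1 /
        (qPoch q q p.1 * qPoch q q p.2.1 *
          qPoch (q ^ ((1 : ℤ) - (p.1 : ℤ)) / a) q p.2.1 *
          qPoch q q p.2.2 * qPoch x q p.2.2)
    = qPochInf (-q) q * qPochInf (a * q) (q ^ 2) / qPochInf x q := by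

  have hq : q ≠ 0 := norm_pos_iff.1 hq0
  have h2 := h1.of_norm
  have hx' : ∀ k : ℕ, 1 - x * q ^ k ≠ 0 := by
    intro k h
    apply hx k
    rw [zpow_neg, zpow_natCast]
    exact eq_inv_of_mul_eq_one_left (by linear_combination -h)
  simp only [term_eq q a x hq hq1] at h2 ⊢
  exact main_aux q a x hq0 hq1 ha haq hx' h2
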